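/- Let F : S → G(S) be a Markov chain on a measurable space S and let A, B ⊆ S be measurable. Define K_E on the ω-cpo of measurable functions S → [0,∞] (ordered pointwise) by (K_E η)(x) = (X η)(x) + 1 if x ∈ A∖B, (K_E η)(x) = 0 if x ∈ B, and (K_E η)(x) = (X η)(x) otherwise. Then K_E is Scott-continuous and its least fixed point μK_E = sup_n K_E^n(0) satisfies E_{s₀}[step_{s₀}^{(A,B)}] = (μK_E)(s₀) for every s₀ ∈ S. -/

import Mathlib

open MeasureTheory ProbabilityTheory Set
open scoped ENNReal NNReal

variable {S : Type*} [MeasurableSpace S]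

/-- Prepend an initial state to a trace. -/
def prep (s₀ : S) (ω : ℕ → S) : ℕ → S := fun n => Nat.rec s₀ (fun k _ => ω k) n

/-- `stepCount A B s₀ ω` is the number of indices `i` with
`0 ≤ i < min {j | s_j ∈ B}` and `s_i ∈ A`, where `s₀ s₁ s₂ ⋯` is the trace `ω`
prefixed with the initial state `s₀`. -/
noncomputable def stepCount (A B : Set S) (s₀ : S) (ω : ℕ → S) : ℕ∞ :=
  {i : ℕ | prep s₀ ω i ∈ A ∧ ∀ j ≤ i, prep s₀ ω j ∉ B}.encard

/-- The next-time operator: `(𝕏 g)(s) = ∫ g dF(s)`. -/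
noncomputable def nextTime (F : Kernel S S) (g : S → ℝ≥0∞) : S → ℝ≥0∞ :=
  fun s => ∫⁻ y, g y ∂(F s)

open scoped Classical in
/-- The monotone function `K_E` whose least fixed point is the expected number of
`A`-steps until reaching `B`. -/
noncomputable def KE (F : Kernel S S) (A B : Set S) (η : S → ℝ≥0∞) : S → ℝ≥0∞ := fun x =>
  if x ∈ B then 0 else if x ∈ A then nextTime F η x + 1 else nextTime F η x

/-!
The iterate `K_E^n 0` is the expected number of counted steps among the first `n` entries of the
trace. Write `p_i(s)` for the probability that entry `i` of the trace started at `s` is counted.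
Conditioning on the first transition gives `p_0 = 1_{A∖B}` and `p_{i+1} = 1_{Bᶜ} · 𝕏 p_i`, while
`K_E η = 1_{A∖B} + 1_{Bᶜ} · 𝕏 η`. As `𝕏` is additive, induction yields `K_E^n 0 = ∑_{i<n} p_i`, and
the supremum over `n` is `∑_i p_i`, the expected step count.
-/

section Iterate

variable {α : Type*} [CompleteLattice α] {f : α → α} {x : α}

theorem isFixedPt_iSup_iterate (hf : Monotone f) (hx : x ≤ f x)
    (hsup : f (⨆ n, f^[n] x) = ⨆ n, f (f^[n] x)) : Function.IsFixedPt f (⨆ n, f^[n] x) := by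
  rw [Function.IsFixedPt, hsup]
  simp only [← Function.iterate_succ_apply']
  exact (hf.monotone_iterate_of_le_map hx).iSup_nat_add 1

theorem iSup_iterate_le_of_map_le (hf : Monotone f) {a : α} (hxa : x ≤ a) (ha : f a ≤ a) :
    ⨆ n, f^[n] x ≤ a :=
  iSup_le fun n => (hf.iterate n hxa).trans (hf.antitone_iterate_of_map_le ha n.zero_le)

end Iterate

theorem measurable_map_of_measurable_uncurry {α β γ : Type*} [MeasurableSpace α]
    [MeasurableSpace β] [MeasurableSpace γ] (κ : Kernel α β) [IsSFiniteKernel κ]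
    {f : α → β → γ} (hf : Measurable f.uncurry) : Measurable fun a => (κ a).map (f a) := by
  have map_eq (a : α) : (κ a).map (f a) = (Kernel.id ×ₖ κ).map f.uncurry a := by
    rw [Kernel.map_apply _ hf, Kernel.prod_apply, Kernel.id_apply, Measure.dirac_prod,
      Measure.map_map hf measurable_prodMk_left]
    rfl
  simp only [map_eq]
  exact Kernel.measurable _

section Prep

@[simp]
theorem prep_zero {α : Type*} (s : α) (ω : ℕ → α) : prep s ω 0 = s := rfl

@[simp]
theorem prep_succ {α : Type*} (s : α) (ω : ℕ → α) (i : ℕ) : prep s ω (i + 1) = ω i := rfl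

theorem measurable_uncurry_prep : Measurable (Function.uncurry (prep (S := S))) := by
  refine measurable_pi_lambda _ fun i => ?_
  cases i with
  | zero => exact measurable_fst
  | succ i => exact (measurable_pi_apply i).comp measurable_snd

theorem measurable_prep (s : S) : Measurable (prep s) :=
  measurable_uncurry_prep.comp measurable_prodMk_left

theorem bind_map_prep_apply (μ : Measure S) (P : Kernel S (ℕ → S)) [IsSFiniteKernel P]
    {E : Set (ℕ → S)} (hE : MeasurableSet E) :
    (μ.bind fun t => (P t).map (prep t)) E = ∫⁻ t, P t (prep t ⁻¹' E) ∂μ := by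
  rw [Measure.bind_apply hE
    (measurable_map_of_measurable_uncurry P measurable_uncurry_prep).aemeasurable]
  exact lintegral_congr fun t => Measure.map_apply (measurable_prep t) hE

end Prep

section NextTime

variable (F : Kernel S S)

theorem nextTime_mono : Monotone (nextTime F) :=
  fun _ _ hηζ _ => lintegral_mono hηζ

theorem measurable_nextTime {η : S → ℝ≥0∞} (hη : Measurable η) : Measurable (nextTime F η) :=
  hη.lintegral_kernel

theorem nextTime_iSup {c : ℕ → S → ℝ≥0∞} (hc : ∀ n, Measurable (c n)) (hmono : Monotone c) :
    nextTime F (⨆ n, c n) = ⨆ n, nextTime F (c n) := by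
  ext s
  simp only [nextTime, iSup_apply, lintegral_iSup hc hmono]

theorem nextTime_finsetSum {ι : Type*} (I : Finset ι) {g : ι → S → ℝ≥0∞}
    (hg : ∀ i ∈ I, Measurable (g i)) :
    nextTime F (∑ i ∈ I, g i) = ∑ i ∈ I, nextTime F (g i) := by
  ext s
  simp only [nextTime, Finset.sum_apply, lintegral_finsetSum I hg]

end NextTime

section KE

variable (F : Kernel S S) (A B : Set S)

theorem KE_eq_indicator_add_indicator (η : S → ℝ≥0∞) :
    KE F A B η = (A \ B).indicator 1 + Bᶜ.indicator (nextTime F η) := by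
  classical
  ext x
  by_cases hB : x ∈ B <;> by_cases hA : x ∈ A <;> simp [KE, hA, hB, add_comm]

theorem KE_mono : Monotone (KE F A B) := by
  intro η ζ hηζ
  simp only [KE_eq_indicator_add_indicator]
  gcongr
  exact nextTime_mono F hηζ

theorem KE_iSup {c : ℕ → S → ℝ≥0∞} (hc : ∀ n, Measurable (c n)) (hmono : Monotone c) :
    KE F A B (⨆ n, c n) = ⨆ n, KE F A B (c n) := by
  ext x
  by_cases hB : x ∈ B <;>
    simp [KE_eq_indicator_add_indicator, hB, nextTime_iSup F hc hmono, ENNReal.add_iSup]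

variable {A B}

theorem measurable_KE (hA : MeasurableSet A) (hB : MeasurableSet B) {η : S → ℝ≥0∞}
    (hη : Measurable η) : Measurable (KE F A B η) := by
  rw [KE_eq_indicator_add_indicator]
  exact (measurable_one.indicator (hA.diff hB)).add
    ((measurable_nextTime F hη).indicator hB.compl)

theorem measurable_KE_iterate (hA : MeasurableSet A) (hB : MeasurableSet B) {η : S → ℝ≥0∞}
    (hη : Measurable η) (n : ℕ) : Measurable ((KE F A B)^[n] η) :=
  Function.Iterate.rec Measurable hη (fun _ => measurable_KE F hA hB) n

end KE

section StepEvent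

/-- The set of traces whose `i`-th entry is a counted step: it lies in `A`, and `B` has not been
visited up to and including time `i`. Traces here include the initial state as entry `0`. -/
def stepEvent {α : Type*} (A B : Set α) (i : ℕ) : Set (ℕ → α) :=
  {σ | σ i ∈ A ∧ ∀ j ≤ i, σ j ∉ B}

theorem measurableSet_stepEvent {A B : Set S} (hA : MeasurableSet A) (hB : MeasurableSet B)
    (i : ℕ) : MeasurableSet (stepEvent A B i) := by
  unfold stepEvent
  measurability

variable {α : Type*} (A B : Set α) (s : α) (ω : ℕ → α)

theorem prep_mem_stepEvent_zero : prep s ω ∈ stepEvent A B 0 ↔ s ∈ A \ B := by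
  simp [stepEvent]

theorem prep_mem_stepEvent_succ (i : ℕ) :
    prep s ω ∈ stepEvent A B (i + 1) ↔ s ∉ B ∧ ω ∈ stepEvent A B i := by
  have avoids_iff : (∀ j ≤ i + 1, prep s ω j ∉ B) ↔ s ∉ B ∧ ∀ j ≤ i, ω j ∉ B := by
    simp only [← Nat.lt_succ_iff, Nat.forall_lt_succ_left, prep_zero, prep_succ]
  simp only [stepEvent, mem_ofPred_eq, prep_succ, avoids_iff]
  tauto

theorem stepCount_eq_tsum_indicator :
    (stepCount A B s ω : ℝ≥0∞) = ∑' i, (prep s ⁻¹' stepEvent A B i).indicator 1 ω := by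
  rw [stepCount, ← ENNReal.tsum_set_one, tsum_subtype _ fun _ => 1]
  rfl

end StepEvent

section StepProb

/-- The probability, as a function of the initial state `s`, that time `i` is a counted step. The
traces drawn from `P s` omit `s`, hence the preimage under `prep s`. -/
noncomputable def stepProb (P : Kernel S (ℕ → S)) (A B : Set S) (i : ℕ) (s : S) : ℝ≥0∞ :=
  P s (prep s ⁻¹' stepEvent A B i)

variable {F : Kernel S S} {P : Kernel S (ℕ → S)} {A B : Set S}

theorem stepProb_zero [IsMarkovKernel P] : stepProb P A B 0 = (A \ B).indicator 1 := by
  ext s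
  by_cases hs : s ∈ A \ B <;> simp [stepProb, preimage, prep_mem_stepEvent_zero, hs]

theorem stepProb_succ [IsSFiniteKernel P]
    (hP : ∀ s, P s = (F s).bind fun t => (P t).map (prep t))
    (hA : MeasurableSet A) (hB : MeasurableSet B) (i : ℕ) :
    stepProb P A B (i + 1) = Bᶜ.indicator (nextTime F (stepProb P A B i)) := by
  ext s
  by_cases hs : s ∈ B
  · simp [stepProb, preimage, prep_mem_stepEvent_succ, hs]
  · calc stepProb P A B (i + 1) s
        = P s (stepEvent A B i) := by simp [stepProb, preimage, prep_mem_stepEvent_succ, hs]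
      _ = ∫⁻ t, stepProb P A B i t ∂F s := by
        rw [hP s, bind_map_prep_apply _ _ (measurableSet_stepEvent hA hB i)]
        rfl
      _ = Bᶜ.indicator (nextTime F (stepProb P A B i)) s := by simp [nextTime, hs]

theorem measurable_stepProb [IsSFiniteKernel P] (hA : MeasurableSet A) (hB : MeasurableSet B)
    (i : ℕ) : Measurable (stepProb P A B i) :=
  Kernel.measurable_kernel_prodMk_left
    (measurable_uncurry_prep (measurableSet_stepEvent hA hB i))

theorem lintegral_stepCount (hA : MeasurableSet A) (hB : MeasurableSet B) (s : S) :
    ∫⁻ ω, (stepCount A B s ω : ℝ≥0∞) ∂P s = ∑' i, stepProb P A B i s := by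
  have measurableSet_preimage (i : ℕ) : MeasurableSet (prep s ⁻¹' stepEvent A B i) :=
    measurable_prep s (measurableSet_stepEvent hA hB i)
  simp only [stepCount_eq_tsum_indicator]
  rw [lintegral_tsum fun i => (measurable_one.indicator (measurableSet_preimage i)).aemeasurable]
  exact tsum_congr fun i => lintegral_indicator_one (measurableSet_preimage i)

theorem KE_iterate_zero_eq_sum_stepProb [IsMarkovKernel P]
    (hP : ∀ s, P s = (F s).bind fun t => (P t).map (prep t))
    (hA : MeasurableSet A) (hB : MeasurableSet B) (n : ℕ) :
    (KE F A B)^[n] 0 = ∑ i ∈ Finset.range n, stepProb P A B i := by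
  induction n with
  | zero => rfl
  | succ n ih =>
    rw [Function.iterate_succ_apply', ih, KE_eq_indicator_add_indicator,
      nextTime_finsetSum F _ fun i _ => measurable_stepProb hA hB i, Finset.indicator_sum,
      Finset.sum_range_succ', stepProb_zero, add_comm]
    simp only [stepProb_succ hP hA hB]

end StepProb

/-- `K_E` is Scott continuous (on ω-chains of measurable functions), its least fixed
point is `μK_E = ⨆ n, K_E^n 0` (a fixed point below every measurable prefixed point),
and `E_{s₀}[step^{(A,B)}_{s₀}] = (μ K_E)(s₀)` for every initial state `s₀`. -/
theorem KE_scottContinuous_and_lfp_eq_expected_step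
    (F : Kernel S S) [IsMarkovKernel F]
    (P : Kernel S (ℕ → S)) [IsMarkovKernel P]
    (hP : ∀ s₀ : S, (P s₀ : Measure (ℕ → S)) = (F s₀).bind fun s₁ => (P s₁).map (prep s₁))
    (A B : Set S) (hA : MeasurableSet A) (hB : MeasurableSet B) :
    (∀ c : ℕ → S → ℝ≥0∞, (∀ n, Measurable (c n)) → Monotone c →
        KE F A B (fun x => ⨆ n, c n x) = fun x => ⨆ n, KE F A B (c n) x)
    ∧ KE F A B (fun x => ⨆ n, (KE F A B)^[n] (fun _ => 0) x)
        = (fun x => ⨆ n, (KE F A B)^[n] (fun _ => 0) x)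
    ∧ (∀ h : S → ℝ≥0∞, Measurable h → KE F A B h ≤ h →
        (fun x => ⨆ n, (KE F A B)^[n] (fun _ => 0) x) ≤ h)
    ∧ ∀ s₀ : S, ∫⁻ ω, (stepCount A B s₀ ω : ℝ≥0∞) ∂(P s₀)
        = ⨆ n, (KE F A B)^[n] (fun _ => 0) s₀ := by
  have monotone_iterate : Monotone fun n => (KE F A B)^[n] 0 :=
    (KE_mono F A B).monotone_iterate_of_le_map zero_le
  have pointwise_iSup (c : ℕ → S → ℝ≥0∞) : (fun x => ⨆ n, c n x) = ⨆ n, c n :=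
    funext fun _ => iSup_apply.symm
  simp only [← Pi.zero_def, pointwise_iSup]
  refine ⟨fun c => KE_iSup F A B,
    isFixedPt_iSup_iterate (KE_mono F A B) zero_le
      (KE_iSup F A B (measurable_KE_iterate F hA hB measurable_zero) monotone_iterate),
    fun h _ => iSup_iterate_le_of_map_le (KE_mono F A B) zero_le, fun s₀ => ?_⟩
  rw [lintegral_stepCount hA hB, ENNReal.tsum_eq_iSup_nat]
  simp only [KE_iterate_zero_eq_sum_stepProb hP hA hB, Finset.sum_apply]
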